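/- For every real z > 0 and every real x with 0 < x < r(z), the infinite product Π_{n≥1, m≥1} (1 − x^n z^m)^{a_{n,m}} converges to a nonzero limit and T(x,z) − zx + x = x / Π_{n≥1, m≥1} (1 − x^n z^m)^{a_{n,m}} (the bivariate analogue of the Cayley product formula). -/

import Mathlib

open SimpleGraph

/-- A rooted tree on vertex set `Fin n`: a connected acyclic simple graph
with a distinguished root vertex. -/
structure RTree (n : ℕ) where
  adj : SimpleGraph (Fin n)
  connected : adj.Connected
  acyclic : adj.IsAcyclic
  root : Fin n

/-- `v` is a leaf of the rooted tree `t`: a vertex of degree one other than the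
root, except that in the one-vertex tree the root counts as a leaf. -/
def IsLeafV {n : ℕ} (t : RTree n) (v : Fin n) : Prop :=
  n = 1 ∨ ((t.adj.neighborSet v).ncard = 1 ∧ v ≠ t.root)

/-- The number of leaves of a rooted tree. -/
noncomputable def numLeaves {n : ℕ} (t : RTree n) : ℕ :=
  Nat.card {v : Fin n // IsLeafV t v}

/-- Root-preserving isomorphism of rooted trees. -/
def treeSetoid (n : ℕ) : Setoid (RTree n) where
  r t t' := ∃ e : t.adj ≃g t'.adj, e t.root = t'.root
  iseqv := by
    constructor
    · intro t; exact ⟨RelIso.refl _, rfl⟩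
    · rintro t t' ⟨e, he⟩
      exact ⟨e.symm, by rw [← he]; exact e.symm_apply_apply t.root⟩
    · rintro a b c ⟨e, he⟩ ⟨f, hf⟩
      exact ⟨e.trans f, by simp [RelIso.trans_apply, he, hf]⟩

/-- `aCount n k` : the number of isomorphism classes of rooted trees with `n`
vertices and exactly `k` leaves. -/
noncomputable def aCount (n k : ℕ) : ℕ :=
  Nat.card (Quotient (Setoid.comap
    (Subtype.val : {t : RTree n // numLeaves t = k} → RTree n)
    (treeSetoid n)))

/-- The real bivariate generating function `T(x,z) = Σ_{n,k} a_{n,k} x^n z^k`. -/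
noncomputable def Treal (x z : ℝ) : ℝ :=
  ∑' p : ℕ × ℕ, (aCount p.1 p.2 : ℝ) * x ^ p.1 * z ^ p.2

/-- `r(ζ)`, the radius of convergence in `x` of `T(x,ζ)` for `ζ > 0`. -/
noncomputable def rFun (ζ : ℝ) : ℝ :=
  sSup {x : ℝ | 0 < x ∧
    Summable (fun p : ℕ × ℕ => (aCount p.1 p.2 : ℝ) * x ^ p.1 * ζ ^ p.2)}

/-!
A finite rooted tree is encoded by its ancestor order, in which `a ≤ b` if `a` lies on the path from
the root to `b`: the graph is the Hasse diagram of this order, and the leaves are its maximal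
elements. In this form, deleting the root is a bijection between isomorphism classes of trees and
finite multisets of isomorphism classes, which loses one vertex and preserves the number of leaves,
except that the one-vertex tree, which has one leaf, corresponds to the empty multiset.

Give a class `c` with `n` vertices and `k` leaves the weight `w c = x ^ n * z ^ k`. The bijection
turns `T(x, z) = ∑ w c` into `x` times the sum of all products `∏_{c ∈ m} w c` over multisets `m`,
plus the correction `z * x - x`. As in Euler's product for `ζ`, multiplying this sum by `1 - w c`
sieves out the multisets containing `c`, so that the sum is `∏ (1 - w c)⁻¹`. Collecting the classes
with the same numbers of vertices and leaves gives the formula.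
-/

/-- A partial order in which the elements below any given element form a chain. A finite rooted
tree is encoded by its ancestor order, in which the root is the bottom element. Unlike Mathlib's
`RootedTree`, this is a mere property, so that a tree can be built without giving its parent map and
its meets. -/
class IsForestOrder (α : Type*) [LE α] : Prop where
  le_total_of_le : ∀ {a b c : α}, a ≤ c → b ≤ c → a ≤ b ∨ b ≤ a

namespace IsForestOrder

section Instances

instance subtype {α : Type*} [LE α] [IsForestOrder α] (p : α → Prop) :
    IsForestOrder {a // p a} where
  le_total_of_le {a b c} := le_total_of_le (a := a.1) (b := b.1) (c := c.1)

instance sigma {ι : Type*} {α : ι → Type*} [∀ i, LE (α i)] [∀ i, IsForestOrder (α i)] :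
    IsForestOrder (Σ i, α i) where
  le_total_of_le := by
    rintro _ _ _ ⟨i, a, c, hac⟩ ⟨_, b, _, hbc⟩
    simpa only [Sigma.mk_le_mk_iff] using le_total_of_le hac hbc

instance withBot {α : Type*} [LE α] [IsForestOrder α] : IsForestOrder (WithBot α) where
  le_total_of_le {a b c} hac hbc := by
    induction a with
    | bot => exact .inl bot_le
    | coe a =>
      induction b with
      | bot => exact .inr bot_le
      | coe b =>
        induction c with
        | bot => exact absurd hac (WithBot.not_coe_le_bot a)
        | coe c =>
          simp only [WithBot.coe_le_coe] at hac hbc ⊢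
          exact le_total_of_le hac hbc

end Instances

variable {α β : Type*} [PartialOrder α] [PartialOrder β]

theorem covBy_unique [IsForestOrder α] {a b c : α} (hac : a ⋖ c) (hbc : b ⋖ c) : a = b := by
  rcases le_total_of_le hac.le hbc.le with hab | hba
  · exact ((hac.eq_or_eq hab hbc.le).resolve_right hbc.ne).symm
  · exact (hbc.eq_or_eq hba hac.le).resolve_right hac.ne

theorem of_covBy_unique [Finite α] (h : ∀ a b c : α, a ⋖ c → b ⋖ c → a = b) :
    IsForestOrder α where
  le_total_of_le {a b c} hac hbc := by
    induction c using WellFoundedLT.induction with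
    | ind c ih =>
      rcases hac.eq_or_lt with rfl | hac
      · exact .inr hbc
      rcases hbc.eq_or_lt with rfl | hbc
      · exact .inl hac.le
      obtain ⟨a', haa', ha'⟩ := exists_le_covBy_of_lt hac
      obtain ⟨b', hbb', hb'⟩ := exists_le_covBy_of_lt hbc
      obtain rfl := h a' b' c ha' hb'
      exact ih a' ha'.lt haa' hbb'

variable [OrderBot α] [OrderBot β]

theorem exists_covBy_of_ne_bot [IsStronglyCoatomic α] {a : α} (ha : a ≠ ⊥) : ∃ b, b ⋖ a :=
  let ⟨b, _, hb⟩ := exists_le_covBy_of_lt (bot_lt_iff_ne_bot.2 ha)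
  ⟨b, hb⟩

section Hasse

theorem connected_hasse [Finite α] : (hasse α).Connected := by
  have reachable_bot (a : α) : (hasse α).Reachable a ⊥ := by
    induction a using WellFoundedLT.induction with
    | ind a ih =>
      rcases eq_or_ne a ⊥ with rfl | ha
      · exact .refl _
      · obtain ⟨b, hb⟩ := exists_covBy_of_ne_bot ha
        have hab : (hasse α).Adj a b := .inr hb
        exact hab.reachable.trans (ih b hb.lt)
  exact ⟨fun a b => (reachable_bot a).trans (reachable_bot b).symm⟩

theorem isTree_hasse [Finite α] [IsForestOrder α] : (hasse α).IsTree := by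
  refine isTree_iff_connected_and_card.2 ⟨connected_hasse, le_antisymm ?_
    connected_hasse.card_vert_le_card_edgeSet_add_one⟩
  choose! parent parent_covBy using fun a : α => exists_covBy_of_ne_bot (a := a)
  have edgeSet_subset : (hasse α).edgeSet ⊆ (fun a => s(a, parent a)) '' {⊥}ᶜ := by
    have mem_image {a b : α} (hab : a ⋖ b) : s(a, b) ∈ (fun a => s(a, parent a)) '' {⊥}ᶜ :=
      ⟨b, hab.lt.ne_bot, by
        rw [covBy_unique hab (parent_covBy b hab.lt.ne_bot), Sym2.eq_swap]⟩
    intro e he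
    induction e with | _ a b
    rcases he with hab | hba
    · exact mem_image hab
    · rw [Sym2.eq_swap]
      exact mem_image hba
  have card_edgeSet_le : (hasse α).edgeSet.ncard ≤ ({⊥}ᶜ : Set α).ncard :=
    (Set.ncard_le_ncard edgeSet_subset).trans Set.ncard_image_le
  have card_compl := Set.ncard_add_ncard_compl ({⊥} : Set α)
  rw [Set.ncard_singleton] at card_compl
  rw [Nat.card_coe_set_eq]
  lia

/-- A bottom-preserving isomorphism of Hasse diagrams does not reverse any cover: a least reversed
cover `a ⋖ b` would give `e a` two distinct lower covers, `e b` and the image of the one of `a`. -/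
theorem covBy_of_hasse_iso [Finite α] [IsForestOrder β] (e : hasse α ≃g hasse β) (he : e ⊥ = ⊥)
    {a b : α} (hab : a ⋖ b) : e a ⋖ e b := by
  induction b using WellFoundedLT.induction generalizing a with
  | ind b ih =>
    rcases e.map_adj_iff.2 (Or.inl hab) with h | h
    · exact h
    rcases eq_or_ne a ⊥ with rfl | ha
    · exact absurd (he ▸ h.lt) not_lt_bot
    · obtain ⟨c, hca⟩ := exists_covBy_of_ne_bot ha
      have hcb : c = b := e.injective (covBy_unique (ih a hab.lt hca) h)
      exact absurd (hcb ▸ hca.lt) hab.lt.asymm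

theorem monotone_of_hasse_iso [Finite α] [IsForestOrder β] (e : hasse α ≃g hasse β)
    (he : e ⊥ = ⊥) : Monotone e := by
  have := Fintype.ofFinite α
  classical
  have := Fintype.toLocallyFiniteOrder (α := α)
  exact (monotone_iff_forall_covBy e).2 fun a b hab => (covBy_of_hasse_iso e he hab).le

theorem nonempty_orderIso_iff_hasse_iso [Finite α] [IsForestOrder α] [IsForestOrder β] :
    Nonempty (α ≃o β) ↔ ∃ e : hasse α ≃g hasse β, e ⊥ = ⊥ := by
  constructor
  · rintro ⟨e⟩
    exact ⟨⟨e.toEquiv, by simp [apply_covBy_apply_iff e]⟩, e.map_bot⟩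
  · rintro ⟨e, he⟩
    have : Finite β := .of_equiv α e.toEquiv
    exact ⟨e.toEquiv.toOrderIso (monotone_of_hasse_iso e he)
      (monotone_of_hasse_iso e.symm (e.symm_apply_eq.2 he.symm))⟩

theorem isMax_iff_hasse [Finite α] [IsForestOrder α] {a : α} :
    IsMax a ↔ Subsingleton α ∨ ((hasse α).neighborSet a).ncard = 1 ∧ a ≠ ⊥ := by
  rw [Set.ncard_eq_one]
  constructor
  · intro hmax
    rcases eq_or_ne a ⊥ with rfl | ha
    · exact .inl (subsingleton_of_forall_eq ⊥ fun b => hmax.eq_of_ge bot_le)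
    · obtain ⟨p, hp⟩ := exists_covBy_of_ne_bot ha
      refine .inr ⟨⟨p, Set.ext fun b => ⟨?_, ?_⟩⟩, ha⟩
      · rintro (hab | hba)
        · exact absurd hab.lt hmax.not_lt
        · exact covBy_unique hba hp
      · rintro rfl
        exact .inr hp
  · rintro (_ | ⟨⟨q, hq⟩, ha⟩)
    · exact fun b _ => (Subsingleton.elim b a).le
    · obtain ⟨p, hp⟩ := exists_covBy_of_ne_bot ha
      have neighbor_eq {b : α} (hb : (hasse α).Adj a b) : b = q :=
        Set.mem_singleton_iff.1 (hq ▸ hb)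
      refine isMax_iff_forall_not_lt.2 fun b hab => ?_
      obtain ⟨c, hac, -⟩ := exists_covBy_le_of_lt hab
      have hcp : c = p := (neighbor_eq (.inl hac)).trans (neighbor_eq (.inr hp)).symm
      exact hp.lt.asymm (hcp ▸ hac.lt)

end Hasse

end IsForestOrder

section Branches

variable {α β : Type*}

/-- An order isomorphism restricts to the subtree above a vertex. -/
def iciCongr [Preorder α] [Preorder β] (e : α ≃o β) (a : α) : Set.Ici a ≃o Set.Ici (e a) where
  toEquiv := e.toEquiv.subtypeEquiv fun _ => e.le_iff_le.symm
  map_rel_iff' := e.map_rel_iff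

/-- A rooted tree is its root together with the branches above the children of the root. -/
noncomputable def withBotSigmaIciIso (α : Type*) [PartialOrder α] [OrderBot α] [Finite α]
    [IsForestOrder α] : WithBot (Σ c : {c : α // IsAtom c}, Set.Ici c.1) ≃o α :=
  RelIso.ofSurjective
    (OrderEmbedding.ofMapLEIff (WithBot.recBotCoe ⊥ fun s => s.2.1) <| by
      rintro (_ | ⟨c, a, hca⟩) (_ | ⟨d, b, hdb⟩)
      · exact iff_of_true le_rfl le_rfl
      · exact iff_of_true bot_le bot_le
      · exact iff_of_false (fun h => c.2.1 (le_bot_iff.1 (hca.trans h)))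
          (WithBot.not_coe_le_bot _)
      · refine Iff.trans ⟨fun hab => ?_, ?_⟩ WithBot.coe_le_coe.symm
        · obtain rfl : c = d := Subtype.ext <| by
            rcases IsForestOrder.le_total_of_le (hca.trans hab) hdb with h | h
            · exact (d.2.le_iff_eq c.2.1).1 h
            · exact ((c.2.le_iff_eq d.2.1).1 h).symm
          exact .fiber _ _ _ hab
        · rintro ⟨_, _, _, hab⟩
          exact hab) <| by
    intro a
    rcases eq_bot_or_exists_atom_le a with rfl | ⟨c, hc, hca⟩
    · exact ⟨⊥, rfl⟩
    · exact ⟨WithBot.some ⟨⟨c, hc⟩, a, hca⟩, rfl⟩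

variable {ι : Type*} {α : ι → Type*}

theorem card_withBot_sigma [Fintype ι] [∀ i, Finite (α i)] :
    Nat.card (WithBot (Σ i, α i)) = ∑ i, Nat.card (α i) + 1 :=
  Finite.card_option.trans (congrArg (· + 1) Nat.card_sigma)

variable [∀ i, PartialOrder (α i)]

/-- The inclusion of the `i`-th summand in the tree obtained by joining trees to a new root. -/
def branchEmbedding (i : ι) : α i ↪o WithBot (Σ i, α i) :=
  .ofMapLEIff (fun a => WithBot.some ⟨i, a⟩) fun _ _ => by simp

variable [∀ i, OrderBot (α i)]

theorem branchEmbedding_bot_le {i : ι} {w : WithBot (Σ i, α i)} :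
    branchEmbedding i ⊥ ≤ w ↔ w ∈ Set.range (branchEmbedding (α := α) i) := by
  constructor
  · intro h
    induction w with
    | bot => exact absurd h (WithBot.not_coe_le_bot _)
    | coe w =>
      obtain ⟨_, _, a, -⟩ := WithBot.coe_le_coe.1 h
      exact ⟨a, rfl⟩
  · rintro ⟨a, rfl⟩
    exact (branchEmbedding i).monotone bot_le

/-- The `i`-th branch of the join of the trees `α i` is `α i`. -/
noncomputable def branchIso (i : ι) :
    α i ≃o Set.Ici (branchEmbedding (α := α) i ⊥) :=
  (branchEmbedding i).orderIso.trans
    (.setCongr _ _ (Set.ext fun _ => branchEmbedding_bot_le.symm))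

theorem isAtom_branchEmbedding_bot (i : ι) : IsAtom (branchEmbedding (α := α) i ⊥) := by
  refine ⟨WithBot.coe_ne_bot, fun w hw => ?_⟩
  induction w with
  | bot => rfl
  | coe w =>
    obtain ⟨_, a, _, ha⟩ := WithBot.coe_lt_coe.1 hw
    exact absurd ha not_lt_bot

/-- The children of the root in the join of a family of trees are the roots of these trees. -/
noncomputable def atomEquiv (α : ι → Type*) [∀ i, PartialOrder (α i)] [∀ i, OrderBot (α i)] :
    ι ≃ {w : WithBot (Σ i, α i) // IsAtom w} :=
  Equiv.ofBijective (fun i => ⟨branchEmbedding i ⊥, isAtom_branchEmbedding_bot i⟩) <| by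
    constructor
    · intro i j h
      exact congrArg Sigma.fst (WithBot.coe_injective (congrArg Subtype.val h))
    · rintro ⟨w, hw⟩
      induction w with
      | bot => exact absurd rfl hw.1
      | coe w =>
        have hle : branchEmbedding w.1 ⊥ ≤ (w : WithBot (Σ i, α i)) :=
          branchEmbedding_bot_le.2 ⟨w.2, rfl⟩
        exact ⟨w.1, Subtype.ext ((hw.le_iff_eq WithBot.coe_ne_bot).1 hle)⟩

theorem isMax_branchEmbedding {i : ι} {a : α i} : IsMax (branchEmbedding i a) ↔ IsMax a := by
  constructor
  · intro h b hab
    exact (branchEmbedding i).le_iff_le.1 (h ((branchEmbedding i).monotone hab))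
  · intro h w hw
    obtain ⟨b, rfl⟩ := branchEmbedding_bot_le.1 (((branchEmbedding i).monotone bot_le).trans hw)
    exact (branchEmbedding i).monotone (h ((branchEmbedding i).le_iff_le.1 hw))

theorem card_isMax_withBot_sigma [Fintype ι] [Nonempty ι] [∀ i, Finite (α i)] :
    Nat.card {w : WithBot (Σ i, α i) // IsMax w} = ∑ i, Nat.card {a : α i // IsMax a} := by
  rw [← Nat.card_sigma]
  refine (Nat.card_congr (.ofBijective
    (fun s => ⟨branchEmbedding s.1 s.2.1, isMax_branchEmbedding.2 s.2.2⟩) ⟨?_, ?_⟩)).symm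
  · rintro ⟨i, a, ha⟩ ⟨j, b, hb⟩ h
    cases WithBot.coe_injective (congrArg Subtype.val h)
    rfl
  · rintro ⟨w, hw⟩
    induction w with
    | bot =>
      have ⟨i⟩ := ‹Nonempty ι›
      exact absurd (hw.eq_of_le (bot_le (a := branchEmbedding i ⊥))).symm WithBot.coe_ne_bot
    | coe w => exact ⟨⟨w.1, w.2, isMax_branchEmbedding.1 hw⟩, rfl⟩

end Branches

section IsomorphismClasses

theorem map_univ_val_eq_iff_exists_equiv {ι κ α : Type*} [Fintype ι] [Fintype κ] {f : ι → α}
    {g : κ → α} :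
    Finset.univ.val.map f = Finset.univ.val.map g ↔ ∃ σ : ι ≃ κ, ∀ i, g (σ i) = f i := by
  classical
  constructor
  · intro h
    have nonempty_fiber_equiv (a : α) : Nonempty ({i // f i = a} ≃ {i // g i = a}) := by
      refine ⟨Fintype.equivOfCardEq ?_⟩
      have hcount := congrArg (Multiset.count a) h
      simpa [Multiset.count_map, Fintype.card_subtype, Finset.card_def, eq_comm] using hcount
    have e (a : α) : {i // f i = a} ≃ {i // g i = a} := (nonempty_fiber_equiv a).some
    exact ⟨(Equiv.sigmaFiberEquiv f).symm.trans
      ((Equiv.sigmaCongrRight e).trans (Equiv.sigmaFiberEquiv g)), fun i => (e (f i) ⟨i, rfl⟩).2⟩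
  · rintro ⟨σ, hσ⟩
    rw [← funext hσ, ← Multiset.map_univ_val_equiv σ, Multiset.map_map, Function.comp_def]

theorem exists_map_univ_val_eq {α : Type*} (s : Multiset α) :
    ∃ (n : ℕ) (f : Fin n → α), Finset.univ.val.map f = s := by
  obtain ⟨l, rfl⟩ := Quot.exists_rep s
  exact ⟨l.length, l.get, by rw [Fin.univ_val_map, List.ofFn_get]; rfl⟩

theorem nonempty_withBot_sigma_iso {ι κ : Type*} {α : ι → Type*} {β : κ → Type*}
    [∀ i, PartialOrder (α i)] [∀ k, PartialOrder (β k)] (σ : ι ≃ κ)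
    (e : ∀ i, Nonempty (α i ≃o β (σ i))) :
    Nonempty (WithBot (Σ i, α i) ≃o WithBot (Σ k, β k)) := by
  have e (i : ι) : α i ≃o β (σ i) := (e i).some
  refine ⟨OrderIso.withBotCongr ⟨σ.sigmaCongr fun i => (e i).toEquiv, ?_⟩⟩
  rintro ⟨i, a⟩ ⟨j, b⟩
  constructor
  · intro h
    obtain rfl : i = j := σ.injective (Sigma.le_def.1 h).1
    exact .fiber _ _ _ ((e i).le_iff_le.1 (Sigma.mk_le_mk_iff.1 h))
  · rintro ⟨_, _, _, hab⟩
    exact .fiber _ _ _ ((e i).monotone hab)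

/-- A finite rooted tree, encoded by its ancestor order: the root is the bottom element and the
leaves are the maximal elements. -/
structure FiniteTree : Type 1 where
  carrier : Type
  [partialOrder : PartialOrder carrier]
  [orderBot : OrderBot carrier]
  [finite : Finite carrier]
  [isForestOrder : IsForestOrder carrier]

namespace FiniteTree

instance : CoeSort FiniteTree Type := ⟨carrier⟩

attribute [instance] partialOrder orderBot finite isForestOrder

instance setoid : Setoid FiniteTree where
  r A B := Nonempty (A ≃o B)
  iseqv := ⟨fun _ => ⟨.refl _⟩, fun ⟨e⟩ => ⟨e.symm⟩, fun ⟨e⟩ ⟨e'⟩ => ⟨e.trans e'⟩⟩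

/-- The tree obtained by joining a finite family of trees to a new root. -/
def join {ι : Type} [Finite ι] (A : ι → FiniteTree) : FiniteTree where
  carrier := WithBot (Σ i, A i)
  finite := inferInstanceAs (Finite (Option (Σ i, A i)))

/-- The subtree of the descendants of a vertex, the vertex included. -/
def branch (A : FiniteTree) (a : A) : FiniteTree where
  carrier := Set.Ici a

noncomputable instance (A : FiniteTree) : Fintype {c : A // IsAtom c} := .ofFinite _

end FiniteTree

/-- The isomorphism classes of finite rooted trees. -/
def TreeClass : Type 1 := Quotient FiniteTree.setoid

namespace TreeClass

/-- The isomorphism class of a tree. -/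
def mk (A : FiniteTree) : TreeClass := Quotient.mk _ A

theorem mk_eq_mk {A B : FiniteTree} : mk A = mk B ↔ Nonempty (A ≃o B) := Quotient.eq

theorem mk_surjective : Function.Surjective mk := Quotient.mk_surjective

/-- The number of vertices. -/
noncomputable def size : TreeClass → ℕ :=
  Quotient.lift (fun A => Nat.card A) fun _ _ ⟨e⟩ => Nat.card_congr e.toEquiv

/-- The number of leaves; the root is one exactly when it is the only vertex. -/
noncomputable def leaves : TreeClass → ℕ :=
  Quotient.lift (fun A => Nat.card {a : A // IsMax a}) fun _ _ ⟨e⟩ =>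
    Nat.card_congr (e.toEquiv.subtypeEquiv fun _ => e.isMax_apply.symm)

/-- The multiset of the subtrees rooted at the children of the root. -/
noncomputable def branches : TreeClass → Multiset TreeClass :=
  Quotient.lift (fun A => Finset.univ.val.map fun c : {c : A // IsAtom c} => mk (A.branch c))
    fun _ _ ⟨e⟩ => map_univ_val_eq_iff_exists_equiv.2
      ⟨e.toEquiv.subtypeEquiv fun c => (e.isAtom_iff c).symm,
        fun c => mk_eq_mk.2 ⟨(iciCongr e c.1).symm⟩⟩

theorem branches_mk_join {ι : Type} [Fintype ι] (A : ι → FiniteTree) :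
    branches (mk (.join A)) = Finset.univ.val.map fun i => mk (A i) := by
  let e : ι ≃ {c : FiniteTree.join A // IsAtom c} := atomEquiv fun i => A i
  refine (map_univ_val_eq_iff_exists_equiv.2 ⟨e, fun i => ?_⟩).symm
  exact mk_eq_mk.2 ⟨(branchIso i).symm⟩

theorem exists_eq_mk_join (t : TreeClass) :
    ∃ (ι : Type) (_ : Fintype ι) (A : ι → FiniteTree), t = mk (.join A) := by
  obtain ⟨A, rfl⟩ := mk_surjective t
  exact ⟨{c : A // IsAtom c}, inferInstance, fun c => A.branch c,
    mk_eq_mk.2 ⟨(withBotSigmaIciIso A).symm⟩⟩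

theorem branches_bijective : Function.Bijective branches := by
  constructor
  · intro s t h
    obtain ⟨_, _, A, rfl⟩ := exists_eq_mk_join s
    obtain ⟨_, _, B, rfl⟩ := exists_eq_mk_join t
    rw [branches_mk_join, branches_mk_join] at h
    obtain ⟨σ, hσ⟩ := map_univ_val_eq_iff_exists_equiv.1 h
    exact mk_eq_mk.2
      (nonempty_withBot_sigma_iso σ fun i => mk_eq_mk.1 (hσ i).symm)
  · intro m
    obtain ⟨n, f, rfl⟩ := exists_map_univ_val_eq m
    choose A hA using fun i => mk_surjective (f i)
    exact ⟨mk (.join A), by simp only [branches_mk_join, hA]⟩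

theorem size_eq (t : TreeClass) : t.size = (t.branches.map size).sum + 1 := by
  obtain ⟨ι, _, A, rfl⟩ := exists_eq_mk_join t
  rw [branches_mk_join, Multiset.map_map]
  exact card_withBot_sigma

theorem leaves_eq {t : TreeClass} (ht : t.branches ≠ 0) :
    t.leaves = (t.branches.map leaves).sum := by
  obtain ⟨ι, _, A, rfl⟩ := exists_eq_mk_join t
  rw [branches_mk_join] at ht ⊢
  have : Nonempty ι := by
    by_contra! h
    exact ht (by simp)
  rw [Multiset.map_map]
  exact card_isMax_withBot_sigma

theorem leaves_eq_one {t : TreeClass} (ht : t.branches = 0) : t.leaves = 1 := by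
  have hsize : t.size = 1 := by rw [size_eq, ht, Multiset.map_zero, Multiset.sum_zero]
  obtain ⟨A, rfl⟩ := mk_surjective t
  have : Subsingleton A := (Nat.card_eq_one_iff_unique.1 hsize).1
  exact Nat.card_eq_one_iff_unique.2 ⟨inferInstance, ⟨⊥, fun b _ => (Subsingleton.elim b ⊥).le⟩⟩

theorem size_pos (t : TreeClass) : 0 < t.size := by
  rw [size_eq]
  exact Nat.succ_pos _

theorem leaves_pos (t : TreeClass) : 0 < t.leaves := by
  obtain ⟨A, rfl⟩ := mk_surjective t
  obtain ⟨a, -, ha⟩ := Set.finite_univ.exists_le_maximal (Set.mem_univ (⊥ : A))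
  exact Nat.card_pos_iff.2 ⟨⟨a, fun _ => ha.2 trivial⟩, inferInstance⟩

end TreeClass

end IsomorphismClasses

section AncestorOrder

variable {V : Type*} {G : SimpleGraph V}

/-- The order of the vertices of a graph rooted at `r` in which `u ≤ v` means that `u` lies on a
geodesic from `r` to `v`. In a tree, `u` is then an ancestor of `v`. -/
abbrev ancestorOrder (hG : G.Connected) (r : V) : PartialOrder V where
  le u v := G.dist r u + G.dist u v = G.dist r v
  le_refl u := by rw [dist_self, add_zero]
  le_trans u v w huv hvw := by
    have := hG.dist_triangle (u := u) (v := v) (w := w)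
    have := hG.dist_triangle (u := r) (v := u) (w := w)
    lia
  le_antisymm u v huv hvu := hG.dist_eq_zero_iff.1 (by lia)

theorem ancestorOrder_covBy_iff (hG : G.Connected) {r u v : V} :
    letI := ancestorOrder hG r
    u ⋖ v ↔ G.Adj u v ∧ G.dist r v = G.dist r u + 1 := by
  let := ancestorOrder hG r
  have dist_strictMono {a b : V} (hab : a < b) : G.dist r a < G.dist r b := by
    have hle : G.dist r a + G.dist a b = G.dist r b := hab.le
    have := hG.pos_dist_of_ne hab.ne
    lia
  have covBy_of_adj {a b : V} (hab : G.Adj a b) (hdist : G.dist r b = G.dist r a + 1) :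
      a ⋖ b := by
    have hle : a ≤ b := by
      change G.dist r a + G.dist a b = G.dist r b
      rw [dist_eq_one_iff_adj.2 hab, hdist]
    refine ⟨hle.lt_of_ne hab.ne, fun c hac hcb => ?_⟩
    have := dist_strictMono hac
    have := dist_strictMono hcb
    lia
  refine ⟨fun huv => ?_, fun h => covBy_of_adj h.1 h.2⟩
  -- The first step `w` of a geodesic from `u` to `v` satisfies `u ⋖ w ≤ v`.
  obtain ⟨p, hp⟩ := hG.exists_walk_length_eq_dist u v
  cases p with
  | nil => exact absurd rfl huv.ne
  | cons huw p =>
    rename_i w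
    rw [Walk.length_cons] at hp
    have hle : G.dist r u + G.dist u v = G.dist r v := huv.le
    have := dist_le p
    have := huw.diff_dist_adj (u := r)
    have := hG.dist_triangle (u := r) (v := w) (w := v)
    have hdist : G.dist r w = G.dist r u + 1 := by lia
    have hwv : w ≤ v := by
      change G.dist r w + G.dist w v = G.dist r v
      lia
    obtain rfl : w = v := (huv.eq_or_eq (covBy_of_adj huw hdist).le hwv).resolve_left huw.ne'
    exact ⟨huw, hdist⟩

theorem hasse_ancestorOrder (hG : G.IsTree) (r : V) :
    letI := ancestorOrder hG.connected r
    hasse V = G := by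
  let := ancestorOrder hG.connected r
  ext u v
  rw [hasse_adj, ancestorOrder_covBy_iff, ancestorOrder_covBy_iff, G.adj_comm v u, ← and_or_left,
    and_iff_left_iff_imp]
  intro huv
  exact (hG.dist_eq_dist_add_one_of_adj r huv).symm

theorem isForestOrder_ancestorOrder [Finite V] (hG : G.IsTree) (r : V) :
    letI := ancestorOrder hG.connected r
    IsForestOrder V := by
  let := ancestorOrder hG.connected r
  have exists_path {a c : V} (hac : a ⋖ c) :
      ∃ p : G.Walk r c, p.IsPath ∧ p.penultimate = a := by
    obtain ⟨hadj, hdist⟩ := (ancestorOrder_covBy_iff hG.connected).1 hac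
    obtain ⟨p, hp⟩ := hG.connected.exists_walk_length_eq_dist r a
    exact ⟨p.concat hadj, Walk.isPath_of_length_eq_dist _ (by rw [Walk.length_concat, hp, hdist]),
      p.penultimate_concat hadj⟩
  refine IsForestOrder.of_covBy_unique fun a b c hac hbc => ?_
  obtain ⟨p, hp, rfl⟩ := exists_path hac
  obtain ⟨q, hq, rfl⟩ := exists_path hbc
  rw [(hG.existsUnique_path r c).unique hp hq]

end AncestorOrder

section Counting

namespace FiniteTree

variable {V : Type} [Finite V] {G : SimpleGraph V}

/-- The rooted tree with a given underlying graph. -/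
def ofIsTree (hG : G.IsTree) (r : V) : FiniteTree :=
  letI := ancestorOrder hG.connected r
  { carrier := V
    orderBot := { bot := r, bot_le := fun v => by
                    change G.dist r r + G.dist r v = G.dist r v
                    rw [dist_self, zero_add] }
    isForestOrder := isForestOrder_ancestorOrder hG r }

theorem exists_hasse_ofIsTree_iso (hG : G.IsTree) (r : V) :
    ∃ e : hasse (ofIsTree hG r) ≃g G, e ⊥ = r :=
  ⟨⟨Equiv.refl V, .of_eq (congrArg (Adj · _ _) (hasse_ancestorOrder hG r).symm)⟩, rfl⟩

end FiniteTree

namespace RTree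

open FiniteTree

variable {n : ℕ}

/-- The isomorphism class of a rooted tree on `Fin n`. -/
def toClass (t : RTree n) : TreeClass := .mk (ofIsTree ⟨t.connected, t.acyclic⟩ t.root)

theorem toClass_eq_iff {s t : RTree n} : s.toClass = t.toClass ↔ treeSetoid n s t := by
  rw [toClass, toClass, TreeClass.mk_eq_mk, IsForestOrder.nonempty_orderIso_iff_hasse_iso]
  obtain ⟨eₛ, hₛ⟩ := exists_hasse_ofIsTree_iso ⟨s.connected, s.acyclic⟩ s.root
  obtain ⟨eₜ, hₜ⟩ := exists_hasse_ofIsTree_iso ⟨t.connected, t.acyclic⟩ t.root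
  constructor
  · rintro ⟨e, he⟩
    exact ⟨(eₛ.symm.trans e).trans eₜ, by simp [← hₛ, ← hₜ, he]⟩
  · rintro ⟨e, he⟩
    exact ⟨(eₛ.trans e).trans eₜ.symm, by simp [hₛ, ← hₜ, he]⟩

theorem size_toClass (t : RTree n) : t.toClass.size = n := Nat.card_fin n

theorem leaves_toClass (t : RTree n) : t.toClass.leaves = numLeaves t := by
  obtain ⟨e, he⟩ := exists_hasse_ofIsTree_iso ⟨t.connected, t.acyclic⟩ t.root
  refine Nat.card_congr (e.toEquiv.subtypeEquiv fun a => ?_)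
  have ncard_neighborSet : ((hasse _).neighborSet a).ncard = (t.adj.neighborSet (e a)).ncard :=
    Nat.card_congr (e.mapNeighborSet a)
  have eq_one_iff : n = 1 ↔ Subsingleton (Fin n) := by
    have : 0 < n := t.root.pos
    rw [Fin.subsingleton_iff_le_one]
    lia
  rw [IsForestOrder.isMax_iff_hasse, IsLeafV, eq_one_iff, ncard_neighborSet,
    e.toEquiv.subsingleton_congr]
  exact or_congr_right (and_congr_right' (e.injective.ne_iff' he).symm)

theorem exists_toClass_eq (c : TreeClass) : ∃ t : RTree c.size, t.toClass = c := by
  obtain ⟨A, rfl⟩ := TreeClass.mk_surjective c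
  let e : A ≃ Fin (Nat.card A) := Finite.equivFin A
  let e' : hasse A ≃g (hasse A).map e.toEmbedding := Iso.map e (hasse A)
  have hG : ((hasse A).map e.toEmbedding).IsTree := e'.isTree_iff.1 IsForestOrder.isTree_hasse
  refine ⟨⟨_, hG.connected, hG.isAcyclic, e ⊥⟩, TreeClass.mk_eq_mk.2 ?_⟩
  obtain ⟨e'', he''⟩ := exists_hasse_ofIsTree_iso hG (e ⊥)
  refine IsForestOrder.nonempty_orderIso_iff_hasse_iso.2 ⟨e''.trans e'.symm, ?_⟩
  exact e'.toEquiv.symm_apply_eq.2 he''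

end RTree

instance RTree.instFinite {n : ℕ} : Finite (RTree n) :=
  .of_injective (fun t => (t.adj, t.root)) fun s t h => by
    cases s
    cases t
    simpa using h

/-- The isomorphism classes counted by `aCount n k` are the tree classes with `n` vertices and `k`
leaves. -/
noncomputable def quotientEquivTreeClass (n k : ℕ) :
    Quotient (Setoid.comap (Subtype.val : {t : RTree n // numLeaves t = k} → RTree n)
      (treeSetoid n)) ≃ {c : TreeClass // (c.size, c.leaves) = (n, k)} :=
  .ofBijective
    (Quotient.lift (fun t => ⟨t.1.toClass, by rw [t.1.size_toClass, t.1.leaves_toClass, t.2]⟩)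
      fun _ _ h => Subtype.ext (RTree.toClass_eq_iff.2 h)) <| by
    constructor
    · rintro ⟨s⟩ ⟨t⟩ h
      exact Quotient.sound (RTree.toClass_eq_iff.1 (congrArg Subtype.val h))
    · rintro ⟨c, hc⟩
      obtain ⟨rfl, rfl⟩ := Prod.mk.inj hc
      obtain ⟨t, ht⟩ := RTree.exists_toClass_eq c
      exact ⟨⟦⟨t, by rw [← t.leaves_toClass, ht]⟩⟧, Subtype.ext ht⟩

theorem finite_treeClass_size_leaves (n k : ℕ) :
    Finite {c : TreeClass // (c.size, c.leaves) = (n, k)} :=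
  .of_equiv _ (quotientEquivTreeClass n k)

theorem card_treeClass_size_leaves (n k : ℕ) :
    Nat.card {c : TreeClass // (c.size, c.leaves) = (n, k)} = aCount n k :=
  (Nat.card_congr (quotientEquivTreeClass n k)).symm

end Counting

section EulerProduct

variable {α : Type*}

/-- The multisets without elements in a given finite set, which are those left after sieving by this
set. -/
def multisetsAvoiding (s : Finset α) : Set (Multiset α) := {m | ∀ a ∈ s, a ∉ m}

theorem multisetsAvoiding_eq_union [DecidableEq α] {a : α} {s : Finset α} (ha : a ∉ s) :
    multisetsAvoiding s =
      multisetsAvoiding (insert a s) ∪ Multiset.cons a '' multisetsAvoiding s := by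
  ext m
  constructor
  · intro hm
    by_cases ham : a ∈ m
    · obtain ⟨m, rfl⟩ := Multiset.exists_cons_of_mem ham
      exact .inr ⟨m, fun b hb hbm => hm b hb (Multiset.mem_cons_of_mem hbm), rfl⟩
    · exact .inl ((Finset.forall_mem_insert ..).2 ⟨ham, hm⟩)
  · rintro (hm | ⟨m, hm, rfl⟩) b hb
    · exact hm b (Finset.mem_insert_of_mem hb)
    · have hba : b ≠ a := ne_of_mem_of_not_mem hb ha
      simpa only [Multiset.mem_cons, hba, false_or] using hm b hb

theorem disjoint_multisetsAvoiding_insert [DecidableEq α] (a : α) (s : Finset α) :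
    Disjoint (multisetsAvoiding (insert a s)) (Multiset.cons a '' multisetsAvoiding s) := by
  rw [Set.disjoint_right]
  rintro _ ⟨m, -, rfl⟩ hm
  exact hm a (Finset.mem_insert_self a s) (Multiset.mem_cons_self a m)

section NormedCommRing

variable {R : Type*} [NormedCommRing R] [CompleteSpace R] {w : α → R}

theorem tsum_multisetsAvoiding (h : Summable fun m : Multiset α => ‖(m.map w).prod‖)
    (s : Finset α) :
    ∑' m : multisetsAvoiding s, (m.1.map w).prod =
      (∏ a ∈ s, (1 - w a)) * ∑' m : Multiset α, (m.map w).prod := by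
  classical
  induction s using Finset.induction_on with
  | empty =>
    have avoiding_empty : multisetsAvoiding (∅ : Finset α) = Set.univ :=
      Set.eq_univ_of_forall fun m a ha => absurd ha (Finset.notMem_empty a)
    rw [avoiding_empty, tsum_univ fun m : Multiset α => (m.map w).prod, Finset.prod_empty, one_mul]
  | insert a s ha ih =>
    have tsum_union := Summable.tsum_union_disjoint (disjoint_multisetsAvoiding_insert a s)
      (h.of_norm.subtype _) (h.of_norm.subtype _)
    have tsum_cons : ∑' m : Multiset.cons a '' multisetsAvoiding s, (m.1.map w).prod =
        w a * ∑' m : multisetsAvoiding s, (m.1.map w).prod := by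
      rw [tsum_image (fun m : Multiset α => (m.map w).prod)
        fun _ _ _ _ => (Multiset.cons_inj_right a).1]
      simp only [Multiset.map_cons, Multiset.prod_cons]
      exact (h.of_norm.subtype _).tsum_mul_left _
    rw [← multisetsAvoiding_eq_union ha, ih, tsum_cons, ih] at tsum_union
    rw [Finset.prod_insert ha, mul_assoc, sub_mul, one_mul]
    exact eq_sub_of_add_eq tsum_union.symm

theorem tendsto_tsum_multisetsAvoiding (h : Summable fun m : Multiset α => ‖(m.map w).prod‖) :
    Filter.Tendsto (fun s : Finset α => ∑' m : multisetsAvoiding s, (m.1.map w).prod)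
      Filter.atTop (nhds 1) := by
  have tsum_singleton_zero : ∑' m : ({0} : Set (Multiset α)), (m.1.map w).prod = 1 := by
    rw [tsum_singleton (0 : Multiset α) fun m => (m.map w).prod, Multiset.map_zero,
      Multiset.prod_zero]
  simp only [← tsum_singleton_zero, tsum_subtype _ fun m : Multiset α => (m.map w).prod]
  refine tendsto_tsum_of_dominated_convergence h (fun m => ?_)
    (.of_forall fun s m => norm_indicator_le_norm_self _ m)
  refine tendsto_const_nhds.congr' ?_
  rcases m.empty_or_exists_mem with rfl | ⟨a, ha⟩
  · refine .of_forall fun s => ?_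
    have h_zero : (0 : Multiset α) ∈ multisetsAvoiding s := fun a _ => Multiset.notMem_zero a
    simp only [Set.indicator_of_mem h_zero, Set.indicator_of_mem (Set.mem_singleton _)]
  · filter_upwards [Filter.eventually_ge_atTop {a}] with s hs
    have hm : m ∉ multisetsAvoiding s := fun hm => hm a (Finset.singleton_subset_iff.1 hs) ha
    have hm_zero : m ∉ ({0} : Set (Multiset α)) := by
      rintro rfl
      exact Multiset.notMem_zero a ha
    rw [Set.indicator_of_notMem hm, Set.indicator_of_notMem hm_zero]

theorem tendsto_prod_one_sub_mul_tsum_multiset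
    (h : Summable fun m : Multiset α => ‖(m.map w).prod‖) :
    Filter.Tendsto
      (fun s : Finset α => (∏ a ∈ s, (1 - w a)) * ∑' m : Multiset α, (m.map w).prod)
      Filter.atTop (nhds 1) := by
  simpa only [tsum_multisetsAvoiding h] using tendsto_tsum_multisetsAvoiding h

end NormedCommRing

section NormedField

variable {𝕜 : Type*} [NormedField 𝕜] [CompleteSpace 𝕜] {w : α → 𝕜}

theorem tsum_multiset_ne_zero (h : Summable fun m : Multiset α => ‖(m.map w).prod‖) :
    ∑' m : Multiset α, (m.map w).prod ≠ 0 := by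
  intro h_zero
  have tendsto_one := tendsto_prod_one_sub_mul_tsum_multiset h
  simp only [h_zero, mul_zero] at tendsto_one
  exact zero_ne_one (tendsto_nhds_unique tendsto_const_nhds tendsto_one)

theorem hasProd_one_sub_of_summable_multiset
    (h : Summable fun m : Multiset α => ‖(m.map w).prod‖) :
    HasProd (fun a => 1 - w a) (∑' m : Multiset α, (m.map w).prod)⁻¹ := by
  have h_div := (tendsto_prod_one_sub_mul_tsum_multiset h).div_const
    (∑' m : Multiset α, (m.map w).prod)
  simp only [mul_div_cancel_right₀ _ (tsum_multiset_ne_zero h), one_div] at h_div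
  exact h_div

end NormedField

end EulerProduct

section Fibers

variable {α β : Type*} {f : α → β}

@[to_additive]
theorem hasProd_pow_card_fiber {M : Type*} [CommMonoid M] [TopologicalSpace M] [ContinuousMul M]
    [RegularSpace M] (hf : ∀ b, Finite {a // f a = b}) {g : β → M} {P : M}
    (h : HasProd (fun a => g (f a)) P) :
    HasProd (fun b => g b ^ Nat.card {a // f a = b}) P := by
  refine ((Equiv.sigmaFiberEquiv f).hasProd_iff.2 h).sigma fun b => ?_
  have := Fintype.ofFinite {a // f a = b}
  convert hasProd_fintype (fun _ : {a // f a = b} => g b) using 1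
  · ext a
    exact congrArg g a.2
  · rw [Finset.prod_const, Finset.card_univ, Nat.card_eq_fintype_card]

theorem summable_comp_of_summable_card_fiber_nsmul (hf : ∀ b, Finite {a // f a = b}) {g : β → ℝ}
    (hg : ∀ b, 0 ≤ g b) (h : Summable fun b => Nat.card {a // f a = b} • g b) :
    Summable fun a => g (f a) := by
  refine (Equiv.sigmaFiberEquiv f).summable_iff.1 ((summable_sigma_of_nonneg fun _ => hg _).2 ?_)
  refine ⟨fun b => have := hf b; Summable.of_finite, h.congr fun b => ?_⟩
  have (a : {a // f a = b}) : g (f (Equiv.sigmaFiberEquiv f ⟨b, a⟩)) = g b := congrArg g a.2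
  simp only [this, tsum_const]

end Fibers

section GeneratingFunction

theorem aCount_eq_zero {n k : ℕ} (h : n = 0 ∨ k = 0) : aCount n k = 0 := by
  rw [← card_treeClass_size_leaves]
  refine Nat.card_eq_zero.2 (.inl ⟨fun ⟨c, hc⟩ => ?_⟩)
  obtain ⟨rfl, rfl⟩ := Prod.mk.inj hc
  exact h.elim c.size_pos.ne' c.leaves_pos.ne'

namespace TreeClass

section CommRing

variable {R : Type*} [CommRing R] (x z : R)

/-- The monomial which a tree contributes to the generating function `T(x, z)`. -/
noncomputable def weight (c : TreeClass) : R := x ^ c.size * z ^ c.leaves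

theorem prod_map_weight (m : Multiset TreeClass) :
    (m.map (weight x z)).prod = x ^ (m.map size).sum * z ^ (m.map leaves).sum := by
  induction m using Multiset.induction_on with
  | empty => simp
  | cons c m ih => simp only [Multiset.map_cons, Multiset.prod_cons, Multiset.sum_cons, ih, weight,
      pow_add, mul_mul_mul_comm]

/-- The correction accounts for the one-vertex tree, whose root is a leaf. -/
theorem weight_eq (c : TreeClass) [Decidable (c.branches = 0)] :
    weight x z c =
      x * (c.branches.map (weight x z)).prod + if c.branches = 0 then z * x - x else 0 := by
  rw [weight, size_eq]
  split_ifs with hc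
  · rw [leaves_eq_one hc, hc]
    simp only [Multiset.map_zero, Multiset.sum_zero, Multiset.prod_zero]
    ring
  · rw [leaves_eq hc, prod_map_weight]
    ring

end CommRing

theorem hasSum_prod_map_weight {𝕜 : Type*} [Field 𝕜] [TopologicalSpace 𝕜] [IsTopologicalRing 𝕜]
    {x z T : 𝕜} (hx : x ≠ 0) (h : HasSum (weight x z) T) :
    HasSum (fun m : Multiset TreeClass => (m.map (weight x z)).prod) ((T - z * x + x) / x) := by
  classical
  let e : TreeClass ≃ Multiset TreeClass := .ofBijective branches branches_bijective
  have h_correction : HasSum (fun c => if branches c = 0 then z * x - x else 0) (z * x - x) :=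
    (e.hasSum_iff (f := fun m => if m = 0 then z * x - x else 0)).2 (hasSum_ite_eq 0 _)
  have h_diff : HasSum (fun c => x * ((branches c).map (weight x z)).prod) (T - (z * x - x)) := by
    have term_eq (c : TreeClass) : weight x z c - (if branches c = 0 then z * x - x else 0) =
        x * ((branches c).map (weight x z)).prod := sub_eq_of_eq_add (weight_eq x z c)
    simpa only [term_eq] using h.sub h_correction
  have h_quotient := h_diff.mul_left x⁻¹
  simp only [inv_mul_cancel_left₀ hx] at h_quotient
  rw [sub_add, div_eq_inv_mul]
  exact e.hasSum_iff.1 h_quotient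

theorem summable_weight {x z : ℝ} (hx : 0 ≤ x) (hz : 0 ≤ z)
    (h : Summable fun p : ℕ × ℕ => (aCount p.1 p.2 : ℝ) * x ^ p.1 * z ^ p.2) :
    Summable (weight x z) := by
  refine summable_comp_of_summable_card_fiber_nsmul
    (f := fun c : TreeClass => (c.size, c.leaves)) (g := fun p => x ^ p.1 * z ^ p.2)
    (fun p => finite_treeClass_size_leaves p.1 p.2) (fun p => by positivity)
    (h.congr fun p => ?_)
  rw [card_treeClass_size_leaves, nsmul_eq_mul, mul_assoc]

theorem hasSum_aCount_of_hasSum_weight {R : Type*} [CommRing R] [TopologicalSpace R]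
    [IsTopologicalRing R] {x z T : R} (h : HasSum (weight x z) T) :
    HasSum (fun p : ℕ × ℕ => (aCount p.1 p.2 : R) * x ^ p.1 * z ^ p.2) T := by
  convert hasSum_nsmul_card_fiber (f := fun c : TreeClass => (c.size, c.leaves))
    (g := fun p => x ^ p.1 * z ^ p.2) (fun p => finite_treeClass_size_leaves p.1 p.2) h
    using 2 with p
  rw [card_treeClass_size_leaves, nsmul_eq_mul, mul_assoc]

theorem hasProd_aCount_of_hasProd_one_sub_weight {R : Type*} [CommRing R] [TopologicalSpace R]
    [IsTopologicalRing R] {x z P : R} (h : HasProd (fun c => 1 - weight x z c) P) :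
    HasProd (fun p : ℕ × ℕ =>
      (1 - x ^ (p.1 + 1) * z ^ (p.2 + 1)) ^ aCount (p.1 + 1) (p.2 + 1)) P := by
  have h_all : HasProd (fun p : ℕ × ℕ => (1 - x ^ p.1 * z ^ p.2) ^ aCount p.1 p.2) P := by
    convert hasProd_pow_card_fiber (f := fun c : TreeClass => (c.size, c.leaves))
      (g := fun p => 1 - x ^ p.1 * z ^ p.2) (fun p => finite_treeClass_size_leaves p.1 p.2) h
      using 2 with p
    rw [card_treeClass_size_leaves]
  have succ_injective : Function.Injective (Prod.map Nat.succ Nat.succ) :=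
    Nat.succ_injective.prodMap Nat.succ_injective
  refine (succ_injective.hasProd_iff
    (f := fun p : ℕ × ℕ => (1 - x ^ p.1 * z ^ p.2) ^ aCount p.1 p.2) ?_).2 h_all
  rintro ⟨_ | n, _ | k⟩ hp
  · rw [aCount_eq_zero (.inl rfl), pow_zero]
  · rw [aCount_eq_zero (.inl rfl), pow_zero]
  · rw [aCount_eq_zero (.inr rfl), pow_zero]
  · exact absurd ⟨(n, k), rfl⟩ hp

theorem summable_norm_prod_map_weight {𝕜 : Type*} [NormedField 𝕜] {x z : 𝕜} (hx : x ≠ 0)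
    (h : Summable (weight ‖x‖ ‖z‖)) :
    Summable fun m : Multiset TreeClass => ‖(m.map (weight x z)).prod‖ := by
  refine (hasSum_prod_map_weight (norm_ne_zero_iff.2 hx) h.hasSum).summable.congr fun m => ?_
  simp only [prod_map_weight, norm_mul, norm_pow]

end TreeClass

open TreeClass

theorem summable_of_lt_rFun {x z : ℝ} (hx : 0 ≤ x) (hz : 0 ≤ z) (hxr : x < rFun z) :
    Summable fun p : ℕ × ℕ => (aCount p.1 p.2 : ℝ) * x ^ p.1 * z ^ p.2 := by
  have nonempty : {y : ℝ | 0 < y ∧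
      Summable fun p : ℕ × ℕ => (aCount p.1 p.2 : ℝ) * y ^ p.1 * z ^ p.2}.Nonempty := by
    by_contra! h_empty
    rw [rFun, h_empty, Real.sSup_empty] at hxr
    exact hxr.not_ge hx
  obtain ⟨y, ⟨-, hy⟩, hxy⟩ := exists_lt_of_lt_csSup nonempty hxr
  exact hy.of_nonneg_of_le (fun p => by positivity) fun p => by gcongr

theorem cayley_product_formula_general {𝕜 : Type*} [NormedField 𝕜] [CompleteSpace 𝕜] {x z : 𝕜}
    (h : Summable fun p : ℕ × ℕ => (aCount p.1 p.2 : ℝ) * ‖x‖ ^ p.1 * ‖z‖ ^ p.2) :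
    Multipliable (fun p : ℕ × ℕ =>
      (1 - x ^ (p.1 + 1) * z ^ (p.2 + 1)) ^ aCount (p.1 + 1) (p.2 + 1)) ∧
    (∏' p : ℕ × ℕ,
      (1 - x ^ (p.1 + 1) * z ^ (p.2 + 1)) ^ aCount (p.1 + 1) (p.2 + 1)) ≠ 0 ∧
    (∑' p : ℕ × ℕ, (aCount p.1 p.2 : 𝕜) * x ^ p.1 * z ^ p.2) - z * x + x =
      x / ∏' p : ℕ × ℕ,
        (1 - x ^ (p.1 + 1) * z ^ (p.2 + 1)) ^ aCount (p.1 + 1) (p.2 + 1) := by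
  rcases eq_or_ne x 0 with rfl | hx
  · have term_eq_zero (p : ℕ × ℕ) : (aCount p.1 p.2 : 𝕜) * 0 ^ p.1 * z ^ p.2 = 0 := by
      rcases eq_or_ne p.1 0 with hp | hp
      · rw [aCount_eq_zero (.inl hp), Nat.cast_zero, zero_mul, zero_mul]
      · rw [zero_pow hp, mul_zero, zero_mul]
    simp [term_eq_zero]
  have h_weight : Summable (weight ‖x‖ ‖z‖) := summable_weight (norm_nonneg x) (norm_nonneg z) h
  have h_prod := summable_norm_prod_map_weight hx h_weight
  have hT : HasSum (weight x z) (∑' c, weight x z c) :=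
    (Summable.of_norm (h_weight.congr fun c => by simp only [weight, norm_mul, norm_pow])).hasSum
  have hP := hasProd_aCount_of_hasProd_one_sub_weight (hasProd_one_sub_of_summable_multiset h_prod)
  refine ⟨hP.multipliable, ?_, ?_⟩
  · rw [hP.tprod_eq]
    exact inv_ne_zero (tsum_multiset_ne_zero h_prod)
  · rw [hP.tprod_eq, div_inv_eq_mul, (hasSum_prod_map_weight hx hT).tsum_eq, mul_div_cancel₀ _ hx,
      (hasSum_aCount_of_hasSum_weight hT).tsum_eq]

end GeneratingFunction

/-- The bivariate analogue of the Cayley product formula: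
`T(x,z) − zx + x = x / Π_{n,m ≥ 1} (1 − x^n z^m)^{a_{n,m}}`, the infinite
product converging to a nonzero limit, for `0 < x < r(z)`, `z > 0`. -/
theorem cayley_product_formula (z x : ℝ) (hz : 0 < z) (hx0 : 0 < x)
    (hxr : x < rFun z) :
    Multipliable (fun p : ℕ × ℕ =>
      (1 - x ^ (p.1 + 1) * z ^ (p.2 + 1)) ^ aCount (p.1 + 1) (p.2 + 1)) ∧
    (∏' p : ℕ × ℕ,
      (1 - x ^ (p.1 + 1) * z ^ (p.2 + 1)) ^ aCount (p.1 + 1) (p.2 + 1)) ≠ 0 ∧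
    Treal x z - z * x + x =
      x / ∏' p : ℕ × ℕ,
        (1 - x ^ (p.1 + 1) * z ^ (p.2 + 1)) ^ aCount (p.1 + 1) (p.2 + 1) := by
  refine cayley_product_formula_general (𝕜 := ℝ) ?_
  simpa only [Real.norm_of_nonneg hx0.le, Real.norm_of_nonneg hz.le] using
    summable_of_lt_rFun hx0.le hz.le hxr
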